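/- (Maehara's lemma for singular geometric extensions — main theorem) Let R^s be a finite set of singular geometric rules. In G+R^s, every partition Γ₁;Γ₂⇒Δ₁;Δ₂ of a derivable sequent Γ⇒Δ has a split-interpolant: there exists a formula C such that Γ₁⇒Δ₁,C and C,Γ₂⇒Δ₂ are derivable in G+R^s and L(C) ⊆ L(Γ₁,Δ₁) ∩ L(Γ₂,Δ₂). -/

import Mathlib

/-- Terms: variables or individual constants (no function symbols). -/
inductive Tm where
  | var : ℕ → Tm
  | const : ℕ → Tm
deriving DecidableEq

/-- First-order formulas over a language with denumerably many predicates,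
a logical identity predicate, ⊥, ⊤, ∧, ∨, →, ∀, ∃. -/
inductive Fm where
  | rel : ℕ → List Tm → Fm
  | eq : Tm → Tm → Fm
  | bot : Fm
  | top : Fm
  | and : Fm → Fm → Fm
  | or : Fm → Fm → Fm
  | imp : Fm → Fm → Fm
  | all : ℕ → Fm → Fm
  | ex : ℕ → Fm → Fm
deriving DecidableEq

def Fm.isAtom : Fm → Prop
  | .rel _ _ => True
  | .eq _ _ => True
  | .bot => True
  | .top => True
  | _ => False

/-- Ter(A): the free variables and individual constants of A, as terms. -/
def Fm.ter : Fm → Finset Tm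
  | .rel _ ts => ts.toFinset
  | .eq a b => {a, b}
  | .bot => ∅
  | .top => ∅
  | .and A B => A.ter ∪ B.ter
  | .or A B => A.ter ∪ B.ter
  | .imp A B => A.ter ∪ B.ter
  | .all x A => A.ter.erase (Tm.var x)
  | .ex x A => A.ter.erase (Tm.var x)

/-- Rel(A): the non-logical predicate symbols of A (identity, ⊥, ⊤ are logical). -/
def Fm.rels : Fm → Finset ℕ
  | .rel r _ => {r}
  | .eq _ _ => ∅
  | .bot => ∅
  | .top => ∅
  | .and A B => A.rels ∪ B.rels
  | .or A B => A.rels ∪ B.rels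
  | .imp A B => A.rels ∪ B.rels
  | .all _ A => A.rels
  | .ex _ A => A.rels

def Tm.consts : Tm → Finset ℕ
  | .var _ => ∅
  | .const c => {c}

/-- The individual constants occurring in A. -/
def Fm.consts : Fm → Finset ℕ
  | .rel _ ts => ts.foldr (fun t s => t.consts ∪ s) ∅
  | .eq a b => a.consts ∪ b.consts
  | .bot => ∅
  | .top => ∅
  | .and A B => A.consts ∪ B.consts
  | .or A B => A.consts ∪ B.consts
  | .imp A B => A.consts ∪ B.consts
  | .all _ A => A.consts
  | .ex _ A => A.consts

/-- L(A) = Ter(A) ∪ Rel(A). -/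
def Fm.lang (A : Fm) : Finset (Tm ⊕ ℕ) :=
  A.ter.image Sum.inl ∪ A.rels.image Sum.inr

/-- Ter of a multiset of formulas. -/
def terM (Γ : Multiset Fm) : Finset Tm := (Γ.map Fm.ter).sup

/-- L of a multiset of formulas. -/
def langM (Γ : Multiset Fm) : Finset (Tm ⊕ ℕ) := (Γ.map Fm.lang).sup

/-- s[t/u]: substitute the term t for the term u (a variable or a constant) in s. -/
def Tm.subst (s u t : Tm) : Tm := if s = u then t else s

/-- A[t/u]: substitute the term t for the term u in A (bound occurrences
of a variable u are not replaced). -/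
def Fm.subst : Fm → Tm → Tm → Fm
  | .rel r ts, u, t => .rel r (ts.map (fun s => s.subst u t))
  | .eq a b, u, t => .eq (a.subst u t) (b.subst u t)
  | .bot, _, _ => .bot
  | .top, _, _ => .top
  | .and A B, u, t => .and (A.subst u t) (B.subst u t)
  | .or A B, u, t => .or (A.subst u t) (B.subst u t)
  | .imp A B, u, t => .imp (A.subst u t) (B.subst u t)
  | .all x A, u, t => if u = Tm.var x then .all x A else .all x (A.subst u t)
  | .ex x A, u, t => if u = Tm.var x then .ex x A else .ex x (A.subst u t)

/-- t is free for u in A (no free occurrence of u is in the scope of a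
quantifier binding the variable t, if t is a variable). -/
def Fm.freeFor (t u : Tm) : Fm → Prop
  | .and A B => A.freeFor t u ∧ B.freeFor t u
  | .or A B => A.freeFor t u ∧ B.freeFor t u
  | .imp A B => A.freeFor t u ∧ B.freeFor t u
  | .all x A => u ∉ (Fm.all x A).ter ∨ (t ≠ Tm.var x ∧ A.freeFor t u)
  | .ex x A => u ∉ (Fm.ex x A).ter ∨ (t ≠ Tm.var x ∧ A.freeFor t u)
  | _ => True

/-- Simultaneous substitution of terms for variables (used on atoms). -/
def Tm.applyσ (σ : ℕ → Tm) : Tm → Tm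
  | .var x => σ x
  | .const c => .const c

def Fm.applyσ (σ : ℕ → Tm) : Fm → Fm
  | .rel r ts => .rel r (ts.map (Tm.applyσ σ))
  | .eq a b => .eq (a.applyσ σ) (b.applyσ σ)
  | .bot => .bot
  | .top => .top
  | .and A B => .and (A.applyσ σ) (B.applyσ σ)
  | .or A B => .or (A.applyσ σ) (B.applyσ σ)
  | .imp A B => .imp (A.applyσ σ) (B.applyσ σ)
  | .all x A => .all x (A.applyσ σ)
  | .ex x A => .ex x (A.applyσ σ)

/-- A geometric rule, given by its principal atoms P₁,…,Pₙ (with free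
variables x̄) and, for each of its m ≥ 1 premises, an atom Qᵢ together with
its eigenvariable yᵢ. It corresponds to the geometric axiom
∀x̄(P₁∧…∧Pₙ → ∃y₁Q₁ ∨ … ∨ ∃yₘQₘ). -/
structure GeomRule where
  Ps : List Fm
  QYs : List (Fm × ℕ)
  QYs_ne : QYs ≠ []
  atomP : ∀ P ∈ Ps, P.isAtom
  atomQ : ∀ q ∈ QYs, q.1.isAtom

/-- Rel of a list of formulas. -/
def relsL (L : List Fm) : Finset ℕ := L.foldr (fun A s => A.rels ∪ s) ∅

/-- A singular geometric rule: no individual constants occur in it, and (⋆):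
at most one non-logical predicate occurs among the Qᵢ's and Pⱼ's, and every
non-logical predicate of the Qᵢ's occurs among the Pⱼ's. -/
def GeomRule.Singular (R : GeomRule) : Prop :=
  (∀ P ∈ R.Ps, P.consts = ∅) ∧ (∀ q ∈ R.QYs, q.1.consts = ∅) ∧
  (relsL R.Ps ∪ relsL (R.QYs.map Prod.fst)).card ≤ 1 ∧
  relsL (R.QYs.map Prod.fst) ⊆ relsL R.Ps

/-- The instantiated principal atoms P₁[σ],…,Pₙ[σ] of a geometric rule. -/
def GeomRule.inst (R : GeomRule) (σ : ℕ → Tm) : Multiset Fm :=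
  ((R.Ps.map (Fm.applyσ σ) : List Fm) : Multiset Fm)

/-- `DerG Rules n Γ Δ`: the sequent Γ⇒Δ has a derivation of height at most n
in the calculus G3c extended with the geometric rules in `Rules`
(the plain calculus G is `DerG ∅`). -/
inductive DerG (Rules : Set GeomRule) : ℕ → Multiset Fm → Multiset Fm → Prop where
  | ax {n : ℕ} {P : Fm} {Γ Δ : Multiset Fm} (h : P.isAtom) :
      DerG Rules n (P ::ₘ Γ) (P ::ₘ Δ)
  | botL {n : ℕ} {Γ Δ : Multiset Fm} : DerG Rules n (Fm.bot ::ₘ Γ) Δ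
  | topR {n : ℕ} {Γ Δ : Multiset Fm} : DerG Rules n Γ (Fm.top ::ₘ Δ)
  | andL {n : ℕ} {A B : Fm} {Γ Δ : Multiset Fm} :
      DerG Rules n (A ::ₘ B ::ₘ Γ) Δ → DerG Rules (n + 1) (Fm.and A B ::ₘ Γ) Δ
  | andR {n : ℕ} {A B : Fm} {Γ Δ : Multiset Fm} :
      DerG Rules n Γ (A ::ₘ Δ) → DerG Rules n Γ (B ::ₘ Δ) →
      DerG Rules (n + 1) Γ (Fm.and A B ::ₘ Δ)
  | orL {n : ℕ} {A B : Fm} {Γ Δ : Multiset Fm} :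
      DerG Rules n (A ::ₘ Γ) Δ → DerG Rules n (B ::ₘ Γ) Δ →
      DerG Rules (n + 1) (Fm.or A B ::ₘ Γ) Δ
  | orR {n : ℕ} {A B : Fm} {Γ Δ : Multiset Fm} :
      DerG Rules n Γ (A ::ₘ B ::ₘ Δ) → DerG Rules (n + 1) Γ (Fm.or A B ::ₘ Δ)
  | impL {n : ℕ} {A B : Fm} {Γ Δ : Multiset Fm} :
      DerG Rules n Γ (A ::ₘ Δ) → DerG Rules n (B ::ₘ Γ) Δ →
      DerG Rules (n + 1) (Fm.imp A B ::ₘ Γ) Δ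
  | impR {n : ℕ} {A B : Fm} {Γ Δ : Multiset Fm} :
      DerG Rules n (A ::ₘ Γ) (B ::ₘ Δ) → DerG Rules (n + 1) Γ (Fm.imp A B ::ₘ Δ)
  | allL {n : ℕ} {x : ℕ} {A : Fm} {t : Tm} {Γ Δ : Multiset Fm}
      (hfree : A.freeFor t (Tm.var x)) :
      DerG Rules n (A.subst (Tm.var x) t ::ₘ Fm.all x A ::ₘ Γ) Δ →
      DerG Rules (n + 1) (Fm.all x A ::ₘ Γ) Δ
  | allR {n : ℕ} {x y : ℕ} {A : Fm} {Γ Δ : Multiset Fm}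
      (hfree : A.freeFor (Tm.var y) (Tm.var x))
      (hy : Tm.var y ∉ terM Γ ∪ terM Δ ∪ (Fm.all x A).ter) :
      DerG Rules n Γ (A.subst (Tm.var x) (Tm.var y) ::ₘ Δ) →
      DerG Rules (n + 1) Γ (Fm.all x A ::ₘ Δ)
  | exL {n : ℕ} {x y : ℕ} {A : Fm} {Γ Δ : Multiset Fm}
      (hfree : A.freeFor (Tm.var y) (Tm.var x))
      (hy : Tm.var y ∉ terM Γ ∪ terM Δ ∪ (Fm.ex x A).ter) :
      DerG Rules n (A.subst (Tm.var x) (Tm.var y) ::ₘ Γ) Δ →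
      DerG Rules (n + 1) (Fm.ex x A ::ₘ Γ) Δ
  | exR {n : ℕ} {x : ℕ} {A : Fm} {t : Tm} {Γ Δ : Multiset Fm}
      (hfree : A.freeFor t (Tm.var x)) :
      DerG Rules n Γ (Fm.ex x A ::ₘ A.subst (Tm.var x) t ::ₘ Δ) →
      DerG Rules (n + 1) Γ (Fm.ex x A ::ₘ Δ)
  | geom {n : ℕ} {R : GeomRule} {σ : ℕ → Tm} {Γ Δ : Multiset Fm} (hR : R ∈ Rules)
      (hfresh : ∀ q ∈ R.QYs, ∃ z : ℕ, σ q.2 = Tm.var z ∧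
          Tm.var z ∉ terM (R.inst σ + Γ) ∪ terM Δ)
      (hprem : ∀ q ∈ R.QYs, DerG Rules n (Fm.applyσ σ q.1 ::ₘ (R.inst σ + Γ)) Δ) :
      DerG Rules (n + 1) (R.inst σ + Γ) Δ

/-- Γ⇒Δ is derivable in G + Rules. -/
def Derivable (Rules : Set GeomRule) (Γ Δ : Multiset Fm) : Prop :=
  ∃ n, DerG Rules n Γ Δ

/-- C is a split-interpolant of the partition Γ₁;Γ₂⇒Δ₁;Δ₂ in G + Rules. -/
def SplitInterpolant (Rules : Set GeomRule) (Γ₁ Γ₂ Δ₁ Δ₂ : Multiset Fm) (C : Fm) : Prop :=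
  Derivable Rules Γ₁ (C ::ₘ Δ₁) ∧ Derivable Rules (C ::ₘ Γ₂) Δ₂ ∧
  C.lang ⊆ langM (Γ₁ + Δ₁) ∩ langM (Γ₂ + Δ₂)
/-- Disjunction C₁ ∨ … ∨ Cₘ of a list of formulas. -/
def disj : List Fm → Fm
  | [] => Fm.bot
  | [C] => C
  | C :: L => Fm.or C (disj L)

/-- Conjunction C₁ ∧ … ∧ Cₘ of a list of formulas. -/
def conj : List Fm → Fm
  | [] => Fm.top
  | [C] => C
  | C :: L => Fm.and C (conj L)

/-- A[z̄/t̄]: successively substitute the variable zᵢ for the term tᵢ. -/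
def Fm.substPairs : Fm → List (Tm × ℕ) → Fm
  | A, [] => A
  | A, (t, z) :: L => (A.subst t (Tm.var z)).substPairs L

/-- ∀z̄ A. -/
def foralls (zs : List ℕ) (A : Fm) : Fm := zs.foldr Fm.all A

/-- ∃z̄ A. -/
def exs (zs : List ℕ) (A : Fm) : Fm := zs.foldr Fm.ex A

/-!
The interpolant is built by induction on the derivation. A rule whose principal formulas all lie
in the left part of the partition is treated uniformly: the disjunction of the interpolants of its
premises satisfies (I) and (II), and all its terms occur in the right part. A surplus term, one
absent from the left part, is generalised away by `∀`; this is sound because the derivation of (I)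
survives replacing that term by a fresh variable, the rules containing no constants. If `C`
interpolates a partition, `C → ⊥` interpolates the partition with its parts swapped, which covers
principal formulas in the right part. The principal atoms of a singular rule may be spread over
both parts, but one part contains the only predicate involved: apply the uniform argument with all
principal atoms moved to that part, then return the others one by one, replacing `C` by `A → C` for
each atom `A` and generalising again.
-/

/-! ### Renaming of terms -/

/-- Simultaneous replacement of the free terms of a formula (variables and constants alike)
along `f`. It subsumes `Fm.subst` (see `Fm.subst_eq_rename`) and behaves well only when
`Fm.CaptureFree` holds. -/
def Fm.rename : Fm → (Tm → Tm) → Fm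
  | .rel r ts, f => .rel r (ts.map f)
  | .eq a b, f => .eq (f a) (f b)
  | .bot, _ => .bot
  | .top, _ => .top
  | .and A B, f => .and (A.rename f) (B.rename f)
  | .or A B, f => .or (A.rename f) (B.rename f)
  | .imp A B, f => .imp (A.rename f) (B.rename f)
  | .all x A, f => .all x (A.rename (Function.update f (.var x) (.var x)))
  | .ex x A, f => .ex x (A.rename (Function.update f (.var x) (.var x)))

/-- Renaming `A` along `f` puts no new term in the scope of a quantifier binding it; the
analogue of `Fm.freeFor` for `Fm.rename`. -/
def Fm.CaptureFree : Fm → (Tm → Tm) → Prop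
  | .and A B, f => A.CaptureFree f ∧ B.CaptureFree f
  | .or A B, f => A.CaptureFree f ∧ B.CaptureFree f
  | .imp A B, f => A.CaptureFree f ∧ B.CaptureFree f
  | .all x A, f => (∀ s ∈ A.ter.erase (.var x), f s ≠ .var x) ∧
      A.CaptureFree (Function.update f (.var x) (.var x))
  | .ex x A, f => (∀ s ∈ A.ter.erase (.var x), f s ≠ .var x) ∧
      A.CaptureFree (Function.update f (.var x) (.var x))
  | _, _ => True

/-- The variables bound by some quantifier of a formula. -/
def Fm.boundVars : Fm → Finset ℕ
  | .and A B => A.boundVars ∪ B.boundVars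
  | .or A B => A.boundVars ∪ B.boundVars
  | .imp A B => A.boundVars ∪ B.boundVars
  | .all x A => insert x A.boundVars
  | .ex x A => insert x A.boundVars
  | _ => ∅

/-- The terms moved by `f` go to variables outside `B`. With `B` containing all bound variables
in sight, this makes renaming along `f` capture-free. -/
def MovesOutside (B : Finset ℕ) (f : Tm → Tm) : Prop :=
  ∀ t, f t = t ∨ ∃ z ∉ B, f t = .var z

theorem update_eq_update_of_eqOn_erase {f g : Tm → Tm} {S : Finset Tm} {u : Tm}
    (h : ∀ s ∈ S.erase u, f s = g s) (v : Tm) :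
    ∀ s ∈ S, Function.update f u v s = Function.update g u v s := by
  intro s hs
  by_cases hu : s = u
  · simp [hu]
  · simpa [hu] using h s (Finset.mem_erase.2 ⟨hu, hs⟩)

theorem update_update_id_var {u : Tm} {x : ℕ} (h : u ≠ .var x) (t : Tm) :
    Function.update (Function.update id u t) (.var x) (.var x) = Function.update id u t := by
  rw [Function.update_eq_self_iff, Function.update_of_ne h.symm, id]

theorem update_id_self (u : Tm) : Function.update id u u = id :=
  Function.update_eq_self u id

theorem update_id_comp_update_id {t u s : Tm} (hs : s ≠ u) :
    (Function.update id u t ∘ Function.update id t u) s = s := by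
  by_cases ht : s = t <;> simp [ht, hs]

theorem update_id_comp_update {f : Tm → Tm} {x : ℕ} (hf : ∀ s, f s = .var x → s = .var x)
    (t : Tm) :
    Function.update id (.var x) (f t) ∘ Function.update f (.var x) (.var x) =
      f ∘ Function.update id (.var x) t := by
  funext s
  by_cases hs : s = .var x
  · simp [hs]
  · simp [hs, mt (hf s) hs]

namespace MovesOutside

variable {B B' : Finset ℕ} {f : Tm → Tm}

theorem id (B : Finset ℕ) : MovesOutside B id := fun _ => .inl rfl

theorem mono (hf : MovesOutside B f) (h : B' ⊆ B) : MovesOutside B' f :=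
  fun t => (hf t).imp_right fun ⟨z, hz, e⟩ => ⟨z, fun hz' => hz (h hz'), e⟩

theorem update_self (hf : MovesOutside B f) (u : Tm) :
    MovesOutside B (Function.update f u u) := by
  intro t
  by_cases h : t = u
  · simp [h]
  · simpa [h] using hf t

theorem update_var (hf : MovesOutside B f) (u : Tm) {z : ℕ} (hz : z ∉ B) :
    MovesOutside B (Function.update f u (.var z)) := by
  intro t
  by_cases h : t = u
  · exact .inr ⟨z, hz, by simp [h]⟩
  · simpa [h] using hf t

theorem piecewise (hf : MovesOutside B f) (V : Set Tm) [DecidablePred (· ∈ V)] {z : ℕ}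
    (hz : z ∉ B) : MovesOutside B (V.piecewise (fun _ => .var z) f) := by
  intro t
  by_cases h : t ∈ V
  · exact .inr ⟨z, hz, by simp [h]⟩
  · simpa [h] using hf t

theorem eq_var_of_apply_eq_var (hf : MovesOutside B f) {x : ℕ} (hx : x ∈ B) {s : Tm}
    (h : f s = .var x) : s = .var x := by
  rcases hf s with hs | ⟨z, hz, hs⟩
  · exact hs.symm.trans h
  · cases h.symm.trans hs
    exact absurd hx hz

end MovesOutside

namespace Fm

variable {A : Fm} {f g : Tm → Tm} {t u : Tm} {x y z : ℕ}

theorem rename_congr (h : ∀ s ∈ A.ter, f s = g s) : A.rename f = A.rename g := by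
  induction A generalizing f g with
  | rel r ts => simpa [rename, ter] using h
  | eq a b => simpa [rename, ter] using h
  | bot | top => rfl
  | and A B ihA ihB | or A B ihA ihB | imp A B ihA ihB =>
    simp only [ter, Finset.forall_mem_union] at h
    simp only [rename, ihA h.1, ihB h.2]
  | all x A ih | ex x A ih =>
    simp only [rename, ih (update_eq_update_of_eqOn_erase h _)]

theorem rename_id (A : Fm) : A.rename id = A := by
  induction A <;> simp_all [rename, update_id_self]

theorem rename_eq_self (h : ∀ s ∈ A.ter, f s = s) : A.rename f = A :=
  (rename_congr h).trans A.rename_id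

theorem subst_eq_rename (A : Fm) (u t : Tm) : A.subst u t = A.rename (Function.update id u t) := by
  have tm_subst (s : Tm) : s.subst u t = Function.update id u t s := by
    by_cases h : s = u <;> simp [Tm.subst, h]
  induction A with
  | rel | eq => simp [subst, rename, tm_subst]
  | bot | top => rfl
  | and A B ihA ihB | or A B ihA ihB | imp A B ihA ihB => simp [subst, rename, ihA, ihB]
  | all x A ih | ex x A ih =>
    by_cases h : u = .var x
    · simp [subst, rename, h, update_id_self, rename_id]
    · simp [subst, rename, h, ih, update_update_id_var h]

theorem subst_self (A : Fm) (u : Tm) : A.subst u u = A := by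
  rw [subst_eq_rename, update_id_self, rename_id]

theorem rels_rename (A : Fm) (f : Tm → Tm) : (A.rename f).rels = A.rels := by
  induction A generalizing f <;> simp_all [rename, rels]

theorem rels_subst (A : Fm) (u t : Tm) : (A.subst u t).rels = A.rels := by
  rw [subst_eq_rename, rels_rename]

theorem boundVars_rename (A : Fm) (f : Tm → Tm) : (A.rename f).boundVars = A.boundVars := by
  induction A generalizing f <;> simp_all [rename, boundVars]

theorem boundVars_subst (A : Fm) (u t : Tm) : (A.subst u t).boundVars = A.boundVars := by
  rw [subst_eq_rename, boundVars_rename]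

theorem CaptureFree.congr (hf : A.CaptureFree f) (h : ∀ s ∈ A.ter, f s = g s) :
    A.CaptureFree g := by
  induction A generalizing f g with
  | rel | eq | bot | top => trivial
  | and A B ihA ihB | or A B ihA ihB | imp A B ihA ihB =>
    simp only [ter, Finset.forall_mem_union] at h
    exact ⟨ihA hf.1 h.1, ihB hf.2 h.2⟩
  | all x A ih | ex x A ih =>
    exact ⟨fun s hs => h s hs ▸ hf.1 s hs, ih hf.2 (update_eq_update_of_eqOn_erase h _)⟩

theorem captureFree_id (A : Fm) : A.CaptureFree id := by
  induction A <;> simp_all [CaptureFree, update_id_self]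

theorem captureFree_of_movesOutside (hf : MovesOutside A.boundVars f) : A.CaptureFree f := by
  induction A generalizing f with
  | rel | eq | bot | top => trivial
  | and A B ihA ihB | or A B ihA ihB | imp A B ihA ihB =>
    exact ⟨ihA (hf.mono Finset.subset_union_left), ihB (hf.mono Finset.subset_union_right)⟩
  | all x A ih | ex x A ih =>
    exact ⟨fun s hs h => Finset.ne_of_mem_erase hs
        (hf.eq_var_of_apply_eq_var (Finset.mem_insert_self ..) h),
      ih ((hf.mono (Finset.subset_insert ..)).update_self _)⟩

theorem captureFree_update_id_var (hz : z ∉ A.boundVars) (t : Tm) :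
    A.CaptureFree (Function.update id t (.var z)) :=
  captureFree_of_movesOutside ((MovesOutside.id _).update_var t hz)

theorem freeFor_iff_captureFree : A.freeFor t u ↔ A.CaptureFree (Function.update id u t) := by
  induction A with
  | rel | eq | bot | top => exact Iff.rfl
  | and A B ihA ihB | or A B ihA ihB | imp A B ihA ihB => exact and_congr ihA ihB
  | all x A ih | ex x A ih =>
    by_cases hux : u = .var x
    · simp +contextual [freeFor, CaptureFree, ter, hux, update_id_self, captureFree_id]
    simp only [freeFor, CaptureFree, ter, update_update_id_var hux, ← ih]
    by_cases hu : u ∈ A.ter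
    · have not_captured_iff : (∀ s ∈ A.ter.erase (.var x), Function.update id u t s ≠ .var x) ↔
          t ≠ .var x := by
        refine ⟨fun h => by simpa using h u (Finset.mem_erase.2 ⟨hux, hu⟩), fun ht s hs => ?_⟩
        by_cases hsu : s = u
        · simpa [hsu] using ht
        · simpa [hsu] using Finset.ne_of_mem_erase hs
      rw [not_captured_iff]
      simp [hux, hu]
    · have update_eq (s) (hs : s ∈ A.ter) : id s = Function.update id u t s := by
        rw [Function.update_of_ne (ne_of_mem_of_not_mem hs hu)]
      refine iff_of_true (.inl fun h => hu (Finset.mem_of_mem_erase h)) ⟨fun s hs => ?_, ?_⟩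
      · rw [← update_eq s (Finset.mem_of_mem_erase hs)]
        exact Finset.ne_of_mem_erase hs
      · exact ih.2 (A.captureFree_id.congr update_eq)

theorem freeFor_of_notMem_boundVars (hz : z ∉ A.boundVars) : A.freeFor (.var z) u :=
  freeFor_iff_captureFree.2 (captureFree_update_id_var hz u)

theorem ter_rename (hf : A.CaptureFree f) : (A.rename f).ter = A.ter.image f := by
  induction A generalizing f with
  | rel r ts => ext; simp [rename, ter]
  | eq a b => simp [rename, ter, Finset.image_insert]
  | bot | top => rfl
  | and A B ihA ihB | or A B ihA ihB | imp A B ihA ihB =>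
    simp only [rename, ter, ihA hf.1, ihB hf.2, Finset.image_union]
  | all x A ih | ex x A ih =>
    simp only [rename, ter, ih hf.2]
    ext s
    simp only [Finset.mem_erase, Finset.mem_image]
    constructor
    · rintro ⟨hs, r, hr, rfl⟩
      have hrx : r ≠ .var x := fun h => hs (by simp [h])
      exact ⟨r, ⟨hrx, hr⟩, by simp [hrx]⟩
    · rintro ⟨r, ⟨hrx, hr⟩, rfl⟩
      exact ⟨hf.1 r (Finset.mem_erase.2 ⟨hrx, hr⟩), r, hr, by simp [hrx]⟩

theorem comp_update_eq_of_captureFree (hf : ∀ s ∈ A.ter.erase (.var x), f s ≠ .var x)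
    (g : Tm → Tm) : ∀ s ∈ A.ter,
      (Function.update g (.var x) (.var x) ∘ Function.update f (.var x) (.var x)) s =
        Function.update (g ∘ f) (.var x) (.var x) s := by
  intro s hs
  by_cases hsx : s = .var x
  · simp [hsx]
  · simp [hsx, hf s (Finset.mem_erase.2 ⟨hsx, hs⟩)]

theorem rename_rename (hf : A.CaptureFree f) (g : Tm → Tm) :
    (A.rename f).rename g = A.rename (g ∘ f) := by
  induction A generalizing f g with
  | rel | eq => simp [rename]
  | bot | top => rfl
  | and A B ihA ihB | or A B ihA ihB | imp A B ihA ihB =>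
    simp only [rename, ihA hf.1, ihB hf.2]
  | all x A ih | ex x A ih =>
    simp only [rename, ih hf.2, rename_congr (comp_update_eq_of_captureFree hf.1 g)]

theorem captureFree_rename_iff (hf : A.CaptureFree f) :
    (A.rename f).CaptureFree g ↔ A.CaptureFree (g ∘ f) := by
  induction A generalizing f g with
  | rel | eq | bot | top => exact Iff.rfl
  | and A B ihA ihB | or A B ihA ihB | imp A B ihA ihB =>
    exact and_congr (ihA hf.1) (ihB hf.2)
  | all x A ih | ex x A ih =>
    have ter_eq := ter_rename (A := .all x A) hf
    simp only [rename, ter] at ter_eq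
    have comp_eq := comp_update_eq_of_captureFree hf.1 g
    refine and_congr ?_ ((ih hf.2).trans
      ⟨fun h => h.congr comp_eq, fun h => h.congr fun s hs => (comp_eq s hs).symm⟩)
    rw [ter_eq, Finset.forall_mem_image]
    rfl

theorem rename_subst (hf : MovesOutside (insert x A.boundVars) f) (ht : A.freeFor t (.var x)) :
    (A.subst (.var x) t).rename f =
      (A.rename (Function.update f (.var x) (.var x))).subst (.var x) (f t) := by
  have hfx : A.CaptureFree (Function.update f (.var x) (.var x)) :=
    captureFree_of_movesOutside ((hf.mono (Finset.subset_insert ..)).update_self _)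
  rw [subst_eq_rename, subst_eq_rename, rename_rename (freeFor_iff_captureFree.1 ht),
    rename_rename hfx,
    update_id_comp_update fun _ => hf.eq_var_of_apply_eq_var (Finset.mem_insert_self ..)]

theorem freeFor_rename (hf : MovesOutside (insert x A.boundVars) f) (ht : A.freeFor t (.var x)) :
    (A.rename (Function.update f (.var x) (.var x))).freeFor (f t) (.var x) := by
  have hfA : MovesOutside A.boundVars f := hf.mono (Finset.subset_insert ..)
  rw [freeFor_iff_captureFree] at ht ⊢
  rw [captureFree_rename_iff (captureFree_of_movesOutside (hfA.update_self _)),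
    update_id_comp_update fun _ => hf.eq_var_of_apply_eq_var (Finset.mem_insert_self ..),
    ← captureFree_rename_iff ht]
  exact captureFree_of_movesOutside (by rwa [boundVars_rename])

theorem rename_subst_eigenvar (hf : MovesOutside (insert x A.boundVars) f)
    (hfree : A.freeFor (.var y) (.var x)) (hy : .var y ∉ A.ter.erase (.var x))
    (hz : z ∉ insert x A.boundVars) :
    (A.subst (.var x) (.var y)).rename (Function.update f (.var y) (.var z)) =
      (A.rename (Function.update f (.var x) (.var x))).subst (.var x) (.var z) := by
  rw [rename_subst (hf.update_var _ hz) hfree, Function.update_self]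
  congr 1
  refine rename_congr (update_eq_update_of_eqOn_erase (fun s hs => ?_) _)
  exact Function.update_of_ne (ne_of_mem_of_not_mem hs hy) ..

theorem ter_all_subst_subset (hz : z ∉ A.boundVars) (t : Tm) :
    (all z (A.subst t (.var z))).ter ⊆ A.ter.erase t := by
  rw [ter, subst_eq_rename, ter_rename (captureFree_update_id_var hz t)]
  intro s
  simp only [Finset.mem_erase, Finset.mem_image]
  rintro ⟨hsz, r, hr, rfl⟩
  have hrt : r ≠ t := fun h => hsz (by simp [h])
  simpa [hrt] using hr

theorem subst_subst_cancel (hz : z ∉ A.boundVars) (hzA : .var z ∉ A.ter) (t : Tm) :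
    (A.subst t (.var z)).subst (.var z) t = A := by
  rw [subst_eq_rename, subst_eq_rename, rename_rename (captureFree_update_id_var hz t)]
  exact rename_eq_self fun s hs => update_id_comp_update_id (ne_of_mem_of_not_mem hs hzA)

theorem freeFor_subst_cancel (hz : z ∉ A.boundVars) (hzA : .var z ∉ A.ter) (t : Tm) :
    (A.subst t (.var z)).freeFor t (.var z) := by
  rw [freeFor_iff_captureFree, subst_eq_rename,
    captureFree_rename_iff (captureFree_update_id_var hz t)]
  exact A.captureFree_id.congr fun s hs =>
    (update_id_comp_update_id (ne_of_mem_of_not_mem hs hzA)).symm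

end Fm

/-! ### Sequents and instances of geometric rules -/

/-- Rel of a multiset of formulas. -/
def relsM (Γ : Multiset Fm) : Finset ℕ := (Γ.map Fm.rels).sup

/-- The variables bound by some quantifier of a multiset of formulas. -/
def boundVarsM (Γ : Multiset Fm) : Finset ℕ := (Γ.map Fm.boundVars).sup

theorem terM_cons (A : Fm) (Γ : Multiset Fm) : terM (A ::ₘ Γ) = A.ter ∪ terM Γ := by
  simp [terM]

theorem terM_add (Γ Δ : Multiset Fm) : terM (Γ + Δ) = terM Γ ∪ terM Δ := by
  simp [terM]

theorem relsM_cons (A : Fm) (Γ : Multiset Fm) : relsM (A ::ₘ Γ) = A.rels ∪ relsM Γ := by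
  simp [relsM]

theorem relsM_add (Γ Δ : Multiset Fm) : relsM (Γ + Δ) = relsM Γ ∪ relsM Δ := by
  simp [relsM]

theorem boundVarsM_cons (A : Fm) (Γ : Multiset Fm) :
    boundVarsM (A ::ₘ Γ) = A.boundVars ∪ boundVarsM Γ := by
  simp [boundVarsM]

theorem boundVarsM_add (Γ Δ : Multiset Fm) :
    boundVarsM (Γ + Δ) = boundVarsM Γ ∪ boundVarsM Δ := by
  simp [boundVarsM]

theorem ter_subset_terM {A : Fm} {Γ : Multiset Fm} (h : A ∈ Γ) : A.ter ⊆ terM Γ :=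
  Multiset.le_sup (Multiset.mem_map_of_mem _ h)

theorem map_rename_congr {Γ : Multiset Fm} {f g : Tm → Tm} (h : ∀ s ∈ terM Γ, f s = g s) :
    Γ.map (·.rename f) = Γ.map (·.rename g) :=
  Multiset.map_congr rfl fun _ hA => Fm.rename_congr fun s hs => h s (ter_subset_terM hA hs)

theorem langM_eq (Γ : Multiset Fm) :
    langM Γ = (terM Γ).image Sum.inl ∪ (relsM Γ).image Sum.inr := by
  induction Γ using Multiset.induction with
  | empty => rfl
  | cons A Γ ih =>
    rw [terM_cons, relsM_cons, Finset.image_union, Finset.image_union,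
      Finset.union_union_union_comm, ← ih]
    simp [langM, Fm.lang]

theorem lang_subset_langM_iff {C : Fm} {Γ : Multiset Fm} :
    C.lang ⊆ langM Γ ↔ C.ter ⊆ terM Γ ∧ C.rels ⊆ relsM Γ := by
  simp [langM_eq, Fm.lang, Finset.subset_iff, or_imp, forall_and]

theorem exists_fresh_var (B : Finset ℕ) (S : Finset Tm) : ∃ z ∉ B, Tm.var z ∉ S := by
  have var_injective : Function.Injective Tm.var := fun _ _ h => Tm.var.inj h
  obtain ⟨z, hz⟩ := Infinite.exists_notMem_finset (B ∪ S.preimage Tm.var var_injective.injOn)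
  simp only [Finset.mem_union, Finset.mem_preimage, not_or] at hz
  exact ⟨z, hz⟩

/-- The individual constants occurring in a geometric rule. -/
def GeomRule.consts (R : GeomRule) : Set ℕ :=
  {c | (∃ P ∈ R.Ps, c ∈ P.consts) ∨ ∃ q ∈ R.QYs, c ∈ q.1.consts}

/-- `f` fixes the individual constants occurring in the rules of `Rs`, so that renaming along `f`
maps instances of these rules to instances. -/
def FixesConsts (Rs : Set GeomRule) (f : Tm → Tm) : Prop :=
  ∀ R ∈ Rs, ∀ c ∈ R.consts, f (.const c) = .const c

namespace Fm

variable {P : Fm} {σ : ℕ → Tm} {f : Tm → Tm}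

theorem rels_applyσ (A : Fm) (σ : ℕ → Tm) : (A.applyσ σ).rels = A.rels := by
  induction A <;> simp_all [applyσ, rels]

theorem isAtom.applyσ (hP : P.isAtom) (σ : ℕ → Tm) : (P.applyσ σ).isAtom := by
  cases P <;> trivial

theorem isAtom.rename (hP : P.isAtom) (f : Tm → Tm) : (P.rename f).isAtom := by
  cases P <;> trivial

theorem isAtom.boundVars_eq (hP : P.isAtom) : P.boundVars = ∅ := by
  cases P <;> first | rfl | exact hP.elim

theorem consts_subset_consts_rel (r : ℕ) {ts : List Tm} {s : Tm} (hs : s ∈ ts) :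
    s.consts ⊆ (rel r ts).consts := by
  induction ts with
  | nil => cases hs
  | cons s' ts ih =>
    rcases List.mem_cons.1 hs with rfl | hs
    · exact Finset.subset_union_left
    · exact (ih hs).trans Finset.subset_union_right

theorem isAtom.rename_applyσ (hP : P.isAtom) (hf : ∀ c ∈ P.consts, f (.const c) = .const c) :
    (P.applyσ σ).rename f = P.applyσ (f ∘ σ) := by
  have tm_applyσ {s : Tm} (hs : ∀ c ∈ s.consts, f (.const c) = .const c) :
      f (s.applyσ σ) = s.applyσ (f ∘ σ) := by
    cases s with
    | var x => rfl
    | const c => exact hs c (Finset.mem_singleton_self c)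
  cases P with
  | rel r ts =>
    suffices ∀ s ∈ ts, f (s.applyσ σ) = s.applyσ (f ∘ σ) by simpa [Fm.applyσ, Fm.rename]
    exact fun s hs => tm_applyσ fun c hc => hf c (consts_subset_consts_rel r hs hc)
  | eq a b =>
    simp only [consts, Finset.forall_mem_union] at hf
    simp only [Fm.applyσ, Fm.rename, tm_applyσ hf.1, tm_applyσ hf.2]
  | bot | top => rfl
  | and | or | imp | all | ex => exact hP.elim

end Fm

theorem rels_subset_relsL {A : Fm} {L : List Fm} (h : A ∈ L) : A.rels ⊆ relsL L := by
  induction L with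
  | nil => cases h
  | cons B L ih =>
    rcases List.mem_cons.1 h with rfl | h
    · exact Finset.subset_union_left
    · exact (ih h).trans Finset.subset_union_right

namespace GeomRule

variable {R : GeomRule} {σ : ℕ → Tm} {f : Tm → Tm}

theorem map_rename_inst (hf : ∀ c ∈ R.consts, f (.const c) = .const c) :
    (R.inst σ).map (·.rename f) = R.inst (f ∘ σ) := by
  simp only [inst, Multiset.map_coe, List.map_map]
  exact congrArg _ (List.map_congr_left fun P hP =>
    (R.atomP P hP).rename_applyσ fun c hc => hf c (.inl ⟨P, hP, hc⟩))

theorem rename_applyσ_premise (hf : ∀ c ∈ R.consts, f (.const c) = .const c) {q : Fm × ℕ}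
    (hq : q ∈ R.QYs) : (q.1.applyσ σ).rename f = q.1.applyσ (f ∘ σ) :=
  (R.atomQ q hq).rename_applyσ fun c hc => hf c (.inr ⟨q, hq, hc⟩)

theorem isAtom_of_mem_inst {P : Fm} (hP : P ∈ R.inst σ) : P.isAtom := by
  obtain ⟨P', hP', rfl⟩ := List.mem_map.1 hP
  exact (R.atomP P' hP').applyσ σ

theorem relsM_inst (R : GeomRule) (σ : ℕ → Tm) : relsM (R.inst σ) = relsL R.Ps := by
  simp [relsM, relsL, inst, Function.comp_def, Fm.rels_applyσ, List.foldr_map]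

end GeomRule

/-! ### Renaming and weakening of derivations -/

section

variable {Rs : Set GeomRule} {n m : ℕ} {Γ Γ' Δ Δ' : Multiset Fm} {A B : Fm} {x y : ℕ} {t : Tm}

theorem DerG.succ (h : DerG Rs n Γ Δ) : DerG Rs (n + 1) Γ Δ := by
  induction h with
  | ax hP => exact .ax hP
  | botL => exact .botL
  | topR => exact .topR
  | andL _ ih => exact .andL ih
  | andR _ _ ihA ihB => exact .andR ihA ihB
  | orL _ _ ihA ihB => exact .orL ihA ihB
  | orR _ ih => exact .orR ih
  | impL _ _ ihA ihB => exact .impL ihA ihB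
  | impR _ ih => exact .impR ih
  | allL hfree _ ih => exact .allL hfree ih
  | allR hfree hy _ ih => exact .allR hfree hy ih
  | exL hfree hy _ ih => exact .exL hfree hy ih
  | exR hfree _ ih => exact .exR hfree ih
  | geom hR hfresh _ ih => exact .geom hR hfresh ih

theorem DerG.mono (h : DerG Rs n Γ Δ) (hnm : n ≤ m) : DerG Rs m Γ Δ :=
  Nat.le_induction h (fun _ _ => DerG.succ) m hnm

theorem FixesConsts.update_var {f : Tm → Tm} (hf : FixesConsts Rs f) (y : ℕ) (t : Tm) :
    FixesConsts Rs (Function.update f (.var y) t) := fun R hR c hc => by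
  simpa using hf R hR c hc

theorem FixesConsts.piecewise {f : Tm → Tm} (hf : FixesConsts Rs f) (V : Set Tm)
    [DecidablePred (· ∈ V)] (t : Tm) (hV : ∀ c, Tm.const c ∉ V) :
    FixesConsts Rs (V.piecewise (fun _ => t) f) := fun R hR c hc => by
  simpa [hV c] using hf R hR c hc

/-- Every capture-free renaming of `Γ ⇒ Δ`, weakened arbitrarily, is derivable with height at
most `n`. Proving renaming and weakening together lets each eigenvariable be replaced at once by
one that is fresh for the renamed and weakened conclusion. -/
def StableUnderRenaming (Rs : Set GeomRule) (n : ℕ) (Γ Δ : Multiset Fm) : Prop :=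
  ∀ f, FixesConsts Rs f → MovesOutside (boundVarsM (Γ + Δ)) f → ∀ Γ' Δ',
    DerG Rs n (Γ.map (·.rename f) + Γ') (Δ.map (·.rename f) + Δ')

namespace StableUnderRenaming

theorem allL (hfree : A.freeFor t (.var x))
    (ih : StableUnderRenaming Rs n (A.subst (.var x) t ::ₘ .all x A ::ₘ Γ) Δ) :
    StableUnderRenaming Rs (n + 1) (.all x A ::ₘ Γ) Δ := by
  intro f hc hf Γ' Δ'
  simp only [boundVarsM_add, boundVarsM_cons, Fm.boundVars] at hf
  have hfA : MovesOutside (insert x A.boundVars) f := hf.mono (by grind)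
  have prem := ih f hc (hf.mono (by
    simp only [boundVarsM_add, boundVarsM_cons, Fm.boundVars_subst, Fm.boundVars]; grind)) Γ' Δ'
  simp only [Multiset.map_cons, Multiset.cons_add, Fm.rename_subst hfA hfree] at prem ⊢
  exact .allL (Fm.freeFor_rename hfA hfree) prem

theorem exR (hfree : A.freeFor t (.var x))
    (ih : StableUnderRenaming Rs n Γ (.ex x A ::ₘ A.subst (.var x) t ::ₘ Δ)) :
    StableUnderRenaming Rs (n + 1) Γ (.ex x A ::ₘ Δ) := by
  intro f hc hf Γ' Δ'
  simp only [boundVarsM_add, boundVarsM_cons, Fm.boundVars] at hf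
  have hfA : MovesOutside (insert x A.boundVars) f := hf.mono (by grind)
  have prem := ih f hc (hf.mono (by
    simp only [boundVarsM_add, boundVarsM_cons, Fm.boundVars_subst, Fm.boundVars]; grind)) Γ' Δ'
  simp only [Multiset.map_cons, Multiset.cons_add, Fm.rename_subst hfA hfree] at prem ⊢
  exact .exR (Fm.freeFor_rename hfA hfree) prem

theorem allR (hfree : A.freeFor (.var y) (.var x))
    (hy : .var y ∉ terM Γ ∪ terM Δ ∪ (Fm.all x A).ter)
    (ih : StableUnderRenaming Rs n Γ (A.subst (.var x) (.var y) ::ₘ Δ)) :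
    StableUnderRenaming Rs (n + 1) Γ (.all x A ::ₘ Δ) := by
  intro f hc hf Γ' Δ'
  simp only [boundVarsM_add, boundVarsM_cons, Fm.boundVars] at hf
  simp only [Finset.mem_union, not_or] at hy
  obtain ⟨z, hzB, hz⟩ := exists_fresh_var (boundVarsM Γ ∪ (insert x A.boundVars ∪ boundVarsM Δ))
    (terM (Γ.map (·.rename f) + Γ') ∪ terM (Δ.map (·.rename f) + Δ') ∪ ((Fm.all x A).rename f).ter)
  have rename_context {Θ : Multiset Fm} (hyΘ : .var y ∉ terM Θ) :
      Θ.map (·.rename (Function.update f (.var y) (.var z))) = Θ.map (·.rename f) :=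
    map_rename_congr fun s hs => Function.update_of_ne (ne_of_mem_of_not_mem hs hyΘ) ..
  have prem := ih _ (hc.update_var y (.var z)) ((hf.update_var (.var y) hzB).mono (by
    simp only [boundVarsM_add, boundVarsM_cons, Fm.boundVars_subst]; grind)) Γ' Δ'
  rw [Multiset.map_cons, rename_context hy.1.1, rename_context hy.1.2, Multiset.cons_add,
    Fm.rename_subst_eigenvar (hf.mono (by grind)) hfree hy.2 (by grind)] at prem
  rw [Multiset.map_cons, Multiset.cons_add]
  refine .allR (Fm.freeFor_of_notMem_boundVars ?_) hz prem
  rw [Fm.boundVars_rename]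
  grind

theorem exL (hfree : A.freeFor (.var y) (.var x))
    (hy : .var y ∉ terM Γ ∪ terM Δ ∪ (Fm.ex x A).ter)
    (ih : StableUnderRenaming Rs n (A.subst (.var x) (.var y) ::ₘ Γ) Δ) :
    StableUnderRenaming Rs (n + 1) (.ex x A ::ₘ Γ) Δ := by
  intro f hc hf Γ' Δ'
  simp only [boundVarsM_add, boundVarsM_cons, Fm.boundVars] at hf
  simp only [Finset.mem_union, not_or] at hy
  obtain ⟨z, hzB, hz⟩ := exists_fresh_var (insert x A.boundVars ∪ boundVarsM Γ ∪ boundVarsM Δ)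
    (terM (Γ.map (·.rename f) + Γ') ∪ terM (Δ.map (·.rename f) + Δ') ∪ ((Fm.ex x A).rename f).ter)
  have rename_context {Θ : Multiset Fm} (hyΘ : .var y ∉ terM Θ) :
      Θ.map (·.rename (Function.update f (.var y) (.var z))) = Θ.map (·.rename f) :=
    map_rename_congr fun s hs => Function.update_of_ne (ne_of_mem_of_not_mem hs hyΘ) ..
  have prem := ih _ (hc.update_var y (.var z)) ((hf.update_var (.var y) hzB).mono (by
    simp only [boundVarsM_add, boundVarsM_cons, Fm.boundVars_subst]; grind)) Γ' Δ'
  rw [Multiset.map_cons, rename_context hy.1.1, rename_context hy.1.2, Multiset.cons_add,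
    Fm.rename_subst_eigenvar (hf.mono (by grind)) hfree hy.2 (by grind)] at prem
  rw [Multiset.map_cons, Multiset.cons_add]
  refine .exL (Fm.freeFor_of_notMem_boundVars ?_) hz prem
  rw [Fm.boundVars_rename]
  grind

theorem geom {R : GeomRule} {σ : ℕ → Tm} (hR : R ∈ Rs)
    (hfresh : ∀ q ∈ R.QYs, ∃ z, σ q.2 = .var z ∧ .var z ∉ terM (R.inst σ + Γ) ∪ terM Δ)
    (ih : ∀ q ∈ R.QYs, StableUnderRenaming Rs n (q.1.applyσ σ ::ₘ (R.inst σ + Γ)) Δ) :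
    StableUnderRenaming Rs (n + 1) (R.inst σ + Γ) Δ := by
  classical
  intro f hc hf Γ' Δ'
  let V : Set Tm := {s | ∃ q ∈ R.QYs, σ q.2 = s}
  obtain ⟨z, hzB, hz⟩ := exists_fresh_var (boundVarsM (R.inst σ + Γ + Δ))
    (terM ((R.inst σ + Γ).map (·.rename f) + Γ') ∪ terM (Δ.map (·.rename f) + Δ'))
  let g : Tm → Tm := V.piecewise (fun _ => .var z) f
  have hcg : FixesConsts Rs g := hc.piecewise V (.var z) fun c ⟨q, hq, hσ⟩ => by
    obtain ⟨y, hy, -⟩ := hfresh q hq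
    cases hσ.symm.trans hy
  have rename_context {Θ : Multiset Fm} (hΘ : terM Θ ⊆ terM (R.inst σ + Γ) ∪ terM Δ) :
      Θ.map (·.rename g) = Θ.map (·.rename f) := by
    refine map_rename_congr fun s hs => V.piecewise_eq_of_notMem _ _ ?_
    rintro ⟨q, hq, rfl⟩
    obtain ⟨y, hy, hy'⟩ := hfresh q hq
    exact hy' (hy ▸ hΘ hs)
  have inst_eq : R.inst (g ∘ σ) = (R.inst σ).map (·.rename f) := by
    rw [← R.map_rename_inst (hcg R hR), rename_context (by rw [terM_add]; grind)]
  rw [Multiset.map_add, ← inst_eq, add_assoc] at hz ⊢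
  have eigenvar_mem {q} (hq : q ∈ R.QYs) : σ q.2 ∈ V := ⟨q, hq, rfl⟩
  refine .geom hR (fun q hq => ⟨z, by simp [g, eigenvar_mem hq], hz⟩) fun q hq => ?_
  have prem := ih q hq g hcg ((hf.piecewise V hzB).mono (by
    simp only [boundVarsM_add, boundVarsM_cons, ((R.atomQ q hq).applyσ σ).boundVars_eq]
    grind)) Γ' Δ'
  rwa [Multiset.map_cons, R.rename_applyσ_premise (hcg R hR) hq, Multiset.cons_add,
    rename_context Finset.subset_union_left, rename_context Finset.subset_union_right,
    Multiset.map_add, ← inst_eq, add_assoc] at prem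

end StableUnderRenaming

theorem DerG.stableUnderRenaming (h : DerG Rs n Γ Δ) : StableUnderRenaming Rs n Γ Δ := by
  induction h with
  | ax hP =>
    intro f _ _ Γ' Δ'
    simp only [Multiset.map_cons, Multiset.cons_add]
    exact .ax (hP.rename f)
  | botL => intro f _ _ Γ' Δ'; simp only [Multiset.map_cons, Multiset.cons_add]; exact .botL
  | topR => intro f _ _ Γ' Δ'; simp only [Multiset.map_cons, Multiset.cons_add]; exact .topR
  | allL hfree _ ih => exact .allL hfree ih
  | allR hfree hy _ ih => exact .allR hfree hy ih
  | exL hfree hy _ ih => exact .exL hfree hy ih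
  | exR hfree _ ih => exact .exR hfree ih
  | geom hR hfresh _ ih => exact .geom hR hfresh ih
  | andL _ ih | orR _ ih | impR _ ih =>
    intro f hc hf Γ' Δ'
    have prem := ih f hc (hf.mono (by
      simp only [boundVarsM_add, boundVarsM_cons, Fm.boundVars]; grind)) Γ' Δ'
    simp only [Multiset.map_cons, Multiset.cons_add] at prem ⊢
    first | exact .andL prem | exact .orR prem | exact .impR prem
  | andR _ _ ihA ihB | orL _ _ ihA ihB | impL _ _ ihA ihB =>
    intro f hc hf Γ' Δ'
    have premA := ihA f hc (hf.mono (by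
      simp only [boundVarsM_add, boundVarsM_cons, Fm.boundVars]; grind)) Γ' Δ'
    have premB := ihB f hc (hf.mono (by
      simp only [boundVarsM_add, boundVarsM_cons, Fm.boundVars]; grind)) Γ' Δ'
    simp only [Multiset.map_cons, Multiset.cons_add] at premA premB ⊢
    first | exact .andR premA premB | exact .orL premA premB | exact .impL premA premB

namespace Derivable

theorem rename_of_movesOutside {f : Tm → Tm} (h : Derivable Rs Γ Δ) (hc : FixesConsts Rs f)
    (hf : MovesOutside (boundVarsM (Γ + Δ)) f) :
    Derivable Rs (Γ.map (·.rename f)) (Δ.map (·.rename f)) :=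
  h.imp fun _ hn => by simpa using hn.stableUnderRenaming f hc hf 0 0

theorem mono (h : Derivable Rs Γ Δ) (hΓ : Γ ≤ Γ') (hΔ : Δ ≤ Δ') : Derivable Rs Γ' Δ' := by
  obtain ⟨Γ', rfl⟩ := Multiset.le_iff_exists_add.1 hΓ
  obtain ⟨Δ', rfl⟩ := Multiset.le_iff_exists_add.1 hΔ
  exact h.imp fun _ hn => by
    simpa [Fm.rename_id] using hn.stableUnderRenaming id (fun _ _ _ _ => rfl) (.id _) Γ' Δ'

theorem ax (hA : A.isAtom) : Derivable Rs (A ::ₘ Γ) (A ::ₘ Δ) := ⟨0, .ax hA⟩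

theorem botL : Derivable Rs (.bot ::ₘ Γ) Δ := ⟨0, .botL⟩

theorem topR : Derivable Rs Γ (.top ::ₘ Δ) := ⟨0, .topR⟩

theorem andL : Derivable Rs (A ::ₘ B ::ₘ Γ) Δ → Derivable Rs (.and A B ::ₘ Γ) Δ :=
  fun ⟨n, h⟩ => ⟨n + 1, .andL h⟩

theorem andR : Derivable Rs Γ (A ::ₘ Δ) → Derivable Rs Γ (B ::ₘ Δ) →
    Derivable Rs Γ (.and A B ::ₘ Δ) :=
  fun ⟨n, hA⟩ ⟨m, hB⟩ =>
    ⟨max n m + 1, .andR (hA.mono (le_max_left n m)) (hB.mono (le_max_right n m))⟩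

theorem orL : Derivable Rs (A ::ₘ Γ) Δ → Derivable Rs (B ::ₘ Γ) Δ →
    Derivable Rs (.or A B ::ₘ Γ) Δ :=
  fun ⟨n, hA⟩ ⟨m, hB⟩ =>
    ⟨max n m + 1, .orL (hA.mono (le_max_left n m)) (hB.mono (le_max_right n m))⟩

theorem orR : Derivable Rs Γ (A ::ₘ B ::ₘ Δ) → Derivable Rs Γ (.or A B ::ₘ Δ) :=
  fun ⟨n, h⟩ => ⟨n + 1, .orR h⟩

theorem impL : Derivable Rs Γ (A ::ₘ Δ) → Derivable Rs (B ::ₘ Γ) Δ →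
    Derivable Rs (.imp A B ::ₘ Γ) Δ :=
  fun ⟨n, hA⟩ ⟨m, hB⟩ =>
    ⟨max n m + 1, .impL (hA.mono (le_max_left n m)) (hB.mono (le_max_right n m))⟩

theorem impR : Derivable Rs (A ::ₘ Γ) (B ::ₘ Δ) → Derivable Rs Γ (.imp A B ::ₘ Δ) :=
  fun ⟨n, h⟩ => ⟨n + 1, .impR h⟩

theorem allL (hfree : A.freeFor t (.var x)) :
    Derivable Rs (A.subst (.var x) t ::ₘ .all x A ::ₘ Γ) Δ → Derivable Rs (.all x A ::ₘ Γ) Δ :=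
  fun ⟨n, h⟩ => ⟨n + 1, .allL hfree h⟩

theorem allR (hfree : A.freeFor (.var y) (.var x))
    (hy : .var y ∉ terM Γ ∪ terM Δ ∪ (Fm.all x A).ter) :
    Derivable Rs Γ (A.subst (.var x) (.var y) ::ₘ Δ) → Derivable Rs Γ (.all x A ::ₘ Δ) :=
  fun ⟨n, h⟩ => ⟨n + 1, .allR hfree hy h⟩

theorem exL (hfree : A.freeFor (.var y) (.var x))
    (hy : .var y ∉ terM Γ ∪ terM Δ ∪ (Fm.ex x A).ter) :
    Derivable Rs (A.subst (.var x) (.var y) ::ₘ Γ) Δ → Derivable Rs (.ex x A ::ₘ Γ) Δ :=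
  fun ⟨n, h⟩ => ⟨n + 1, .exL hfree hy h⟩

theorem exR (hfree : A.freeFor t (.var x)) :
    Derivable Rs Γ (.ex x A ::ₘ A.subst (.var x) t ::ₘ Δ) → Derivable Rs Γ (.ex x A ::ₘ Δ) :=
  fun ⟨n, h⟩ => ⟨n + 1, .exR hfree h⟩

theorem geom {R : GeomRule} {σ : ℕ → Tm} (hR : R ∈ Rs)
    (hfresh : ∀ q ∈ R.QYs, ∃ z, σ q.2 = .var z ∧ .var z ∉ terM (R.inst σ + Γ) ∪ terM Δ)
    (hprem : ∀ q ∈ R.QYs, Derivable Rs (q.1.applyσ σ ::ₘ (R.inst σ + Γ)) Δ) :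
    Derivable Rs (R.inst σ + Γ) Δ := by
  choose n hn using hprem
  let N := (R.QYs.attach.map fun q => n q.1 q.2).foldr max 0
  refine ⟨N + 1, .geom hR hfresh fun q hq => (hn q hq).mono ?_⟩
  exact List.le_max_of_le' 0 (List.mem_map_of_mem (List.mem_attach _ ⟨q, hq⟩)) le_rfl

end Derivable

/-! ### Interpolants -/

theorem splitInterpolant_iff {Γ₁ Γ₂ Δ₁ Δ₂ : Multiset Fm} {C : Fm} :
    SplitInterpolant Rs Γ₁ Γ₂ Δ₁ Δ₂ C ↔
      Derivable Rs Γ₁ (C ::ₘ Δ₁) ∧ Derivable Rs (C ::ₘ Γ₂) Δ₂ ∧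
        (C.ter ⊆ terM (Γ₁ + Δ₁) ∧ C.rels ⊆ relsM (Γ₁ + Δ₁)) ∧
        C.ter ⊆ terM (Γ₂ + Δ₂) ∧ C.rels ⊆ relsM (Γ₂ + Δ₂) := by
  rw [SplitInterpolant, Finset.subset_inter_iff, lang_subset_langM_iff, lang_subset_langM_iff]

theorem SplitInterpolant.symm {Γ₁ Γ₂ Δ₁ Δ₂ : Multiset Fm} {C : Fm}
    (h : SplitInterpolant Rs Γ₁ Γ₂ Δ₁ Δ₂ C) : SplitInterpolant Rs Γ₂ Γ₁ Δ₂ Δ₁ (C.imp .bot) := by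
  obtain ⟨left, right, lang⟩ := h
  have lang_imp_bot : (C.imp .bot).lang = C.lang := by simp [Fm.lang, Fm.ter, Fm.rels]
  exact ⟨.impR (right.mono le_rfl (Multiset.le_cons_self ..)), .impL left .botL,
    by rwa [lang_imp_bot, Finset.inter_comm]⟩

theorem exists_splitInterpolant_symm {Γ₁ Γ₂ Δ₁ Δ₂ : Multiset Fm}
    (h : ∃ C, SplitInterpolant Rs Γ₂ Γ₁ Δ₂ Δ₁ C) : ∃ C, SplitInterpolant Rs Γ₁ Γ₂ Δ₁ Δ₂ C :=
  h.elim fun _ hC => ⟨_, hC.symm⟩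

/-- A split-interpolant except that its terms need only occur in the right part of the
partition. -/
structure PreInterpolant (Rs : Set GeomRule) (Γ₁ Γ₂ Δ₁ Δ₂ : Multiset Fm) (C : Fm) : Prop where
  left : Derivable Rs Γ₁ (C ::ₘ Δ₁)
  right : Derivable Rs (C ::ₘ Γ₂) Δ₂
  ter_subset : C.ter ⊆ terM (Γ₂ + Δ₂)
  rels_subset_left : C.rels ⊆ relsM (Γ₁ + Δ₁)
  rels_subset_right : C.rels ⊆ relsM (Γ₂ + Δ₂)

variable {Γ₁ Γ₂ Δ₁ Δ₂ P Q : Multiset Fm} {C : Fm}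

theorem PreInterpolant.generalize (hRs : ∀ R ∈ Rs, R.consts = ∅)
    (h : PreInterpolant Rs Γ₁ Γ₂ Δ₁ Δ₂ C) (ht : t ∉ terM (Γ₁ + Δ₁)) :
    ∃ D, PreInterpolant Rs Γ₁ Γ₂ Δ₁ Δ₂ D ∧ D.ter ⊆ C.ter.erase t := by
  obtain ⟨z, hzB, hz⟩ := exists_fresh_var (boundVarsM (Γ₁ + (C ::ₘ Δ₁))) (terM (Γ₁ + (C ::ₘ Δ₁)))
  have hzC : z ∉ C.boundVars := by
    simp only [boundVarsM_add, boundVarsM_cons] at hzB; grind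
  simp only [terM_add, terM_cons, Finset.mem_union, not_or] at hz ht
  have rename_context {Θ : Multiset Fm} (hΘ : t ∉ terM Θ) :
      Θ.map (·.rename (Function.update id t (.var z))) = Θ := by
    rw [map_rename_congr (g := id) fun s hs =>
      Function.update_of_ne (ne_of_mem_of_not_mem hs hΘ) .., Multiset.map_congr rfl
        fun A _ => A.rename_id, Multiset.map_id']
  have left := h.left.rename_of_movesOutside (f := Function.update id t (.var z))
    (fun R hR c hc => absurd hc (by simp [hRs R hR])) ((MovesOutside.id _).update_var t hzB)
  rw [Multiset.map_cons, rename_context ht.1, rename_context ht.2, ← Fm.subst_eq_rename] at left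
  have hsub := Fm.ter_all_subst_subset hzC t
  refine ⟨.all z (C.subst t (.var z)), ⟨?_, ?_, ?_, ?_, ?_⟩, hsub⟩
  · refine .allR (y := z) (Fm.freeFor_of_notMem_boundVars (by rwa [Fm.boundVars_subst])) ?_ ?_
    · simp [hz, Fm.ter]
    · rwa [Fm.subst_self]
  · refine .allL (t := t) (Fm.freeFor_subst_cancel hzC hz.2.1 t) ?_
    rw [Fm.subst_subst_cancel hzC hz.2.1]
    exact h.right.mono (Multiset.cons_le_cons _ (Multiset.le_cons_self ..)) le_rfl
  · exact (hsub.trans (Finset.erase_subset ..)).trans h.ter_subset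
  · rw [Fm.rels, Fm.rels_subst]
    exact h.rels_subset_left
  · rw [Fm.rels, Fm.rels_subst]
    exact h.rels_subset_right

theorem PreInterpolant.exists_splitInterpolant (hRs : ∀ R ∈ Rs, R.consts = ∅)
    (h : PreInterpolant Rs Γ₁ Γ₂ Δ₁ Δ₂ C) : ∃ D, SplitInterpolant Rs Γ₁ Γ₂ Δ₁ Δ₂ D := by
  induction hS : C.ter using Finset.strongInduction generalizing C with
  | H S ih =>
    subst hS
    by_cases hter : C.ter ⊆ terM (Γ₁ + Δ₁)
    · exact ⟨C, splitInterpolant_iff.2 ⟨h.left, h.right, ⟨hter, h.rels_subset_left⟩,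
        h.ter_subset, h.rels_subset_right⟩⟩
    · obtain ⟨t, htC, ht⟩ := Finset.not_subset.1 hter
      obtain ⟨D, hD, hsub⟩ := h.generalize hRs ht
      exact ih _ (hsub.trans_ssubset (Finset.erase_ssubset htC)) hD rfl

theorem SplitInterpolant.exists_move_atom (hRs : ∀ R ∈ Rs, R.consts = ∅) (hA : A.isAtom)
    (hrels : A.rels ⊆ relsM (Γ₁ + Δ₁)) (h : SplitInterpolant Rs (A ::ₘ Γ₁) Γ₂ Δ₁ Δ₂ C) :
    ∃ D, SplitInterpolant Rs Γ₁ (A ::ₘ Γ₂) Δ₁ Δ₂ D := by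
  obtain ⟨left, right, ⟨-, rels_left⟩, ter_right, rels_right⟩ := splitInterpolant_iff.1 h
  rw [Multiset.cons_add, relsM_cons, Finset.union_eq_right.2 hrels] at rels_left
  have hpre : PreInterpolant Rs Γ₁ (A ::ₘ Γ₂) Δ₁ Δ₂ (A.imp C) :=
    { left := .impR left
      right := .impL (.ax hA)
        (right.mono (Multiset.cons_le_cons _ (Multiset.le_cons_self ..)) le_rfl)
      ter_subset := by
        rw [Multiset.cons_add, terM_cons]
        exact Finset.union_subset_union_right ter_right
      rels_subset_left := Finset.union_subset hrels rels_left
      rels_subset_right := by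
        rw [Multiset.cons_add, relsM_cons]
        exact Finset.union_subset_union_right rels_right }
  exact hpre.exists_splitInterpolant hRs

theorem exists_splitInterpolant_move_atoms (hRs : ∀ R ∈ Rs, R.consts = ∅)
    (hP : ∀ A ∈ P, A.isAtom) (hrels : relsM P ⊆ relsM (Γ₁ + Δ₁))
    (h : ∃ C, SplitInterpolant Rs (P + Γ₁) Γ₂ Δ₁ Δ₂ C) :
    ∃ D, SplitInterpolant Rs Γ₁ (P + Γ₂) Δ₁ Δ₂ D := by
  induction P using Multiset.induction generalizing Γ₂ with
  | empty => simpa using h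
  | cons A P ih =>
    obtain ⟨C, hC⟩ := h
    rw [relsM_cons, Finset.union_subset_iff] at hrels
    rw [Multiset.forall_mem_cons] at hP
    rw [Multiset.cons_add, ← Multiset.add_cons]
    rw [Multiset.cons_add] at hC
    refine ih hP.2 hrels.2 (hC.exists_move_atom hRs hP.1 (hrels.1.trans ?_))
    simp only [relsM_add]
    grind

theorem exists_common_interpolant {T : Finset Tm} {S : Finset ℕ}
    {L : List (Multiset Fm × Multiset Fm)}
    (h : ∀ s ∈ L, ∃ C, Derivable Rs s.1 (C ::ₘ s.2) ∧ Derivable Rs (C ::ₘ Γ) Δ ∧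
      C.ter ⊆ T ∧ C.rels ⊆ S) :
    ∃ D, (∀ s ∈ L, Derivable Rs s.1 (D ::ₘ s.2)) ∧ Derivable Rs (D ::ₘ Γ) Δ ∧
      D.ter ⊆ T ∧ D.rels ⊆ S := by
  induction L with
  | nil => exact ⟨.bot, by simp, .botL, by simp [Fm.ter], by simp [Fm.rels]⟩
  | cons s L ih =>
    rw [List.forall_mem_cons] at h
    obtain ⟨⟨C, left, right, ter, rels⟩, h⟩ := h
    obtain ⟨D, lefts, right', ter', rels'⟩ := ih h
    refine ⟨.or C D, List.forall_mem_cons.2 ⟨?_, fun r hr => ?_⟩, .orL right right',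
      Finset.union_subset ter ter', Finset.union_subset rels rels'⟩
    · exact .orR (left.mono le_rfl (Multiset.cons_le_cons _ (Multiset.le_cons_self ..)))
    · exact .orR ((lefts r hr).mono le_rfl (Multiset.le_cons_self ..))

/-- Every partition of `Γ ⇒ Δ` has a split-interpolant. -/
def Interpolable (Rs : Set GeomRule) (Γ Δ : Multiset Fm) : Prop :=
  ∀ Γ₁ Γ₂ Δ₁ Δ₂, Γ = Γ₁ + Γ₂ → Δ = Δ₁ + Δ₂ → ∃ C, SplitInterpolant Rs Γ₁ Γ₂ Δ₁ Δ₂ C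

theorem exists_splitInterpolant_of_rule {L : List (Multiset Fm × Multiset Fm)}
    (hRs : ∀ R ∈ Rs, R.consts = ∅) (hΓ : Γ = Γ₁ + Γ₂) (hΔ : Δ = Δ₁ + Δ₂)
    (hprem : ∀ s ∈ L, Interpolable Rs (s.1 + Γ) (s.2 + Δ))
    (hrels : ∀ s ∈ L, relsM (s.1 + s.2) ⊆ relsM (P + Q))
    (hrule : ∀ Γ' Δ', terM (Γ' + Δ') ⊆ terM (Γ + Δ) →
      (∀ s ∈ L, Derivable Rs (s.1 + Γ') (s.2 + Δ')) → Derivable Rs (P + Γ') (Q + Δ')) :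
    ∃ C, SplitInterpolant Rs (P + Γ₁) Γ₂ (Q + Δ₁) Δ₂ C := by
  subst hΓ hΔ
  have premise_interpolant : ∀ s ∈ L.map fun s => (s.1 + Γ₁, s.2 + Δ₁), ∃ C,
      Derivable Rs s.1 (C ::ₘ s.2) ∧ Derivable Rs (C ::ₘ Γ₂) Δ₂ ∧ C.ter ⊆ terM (Γ₂ + Δ₂) ∧
        C.rels ⊆ relsM (P + Γ₁ + (Q + Δ₁)) ∩ relsM (Γ₂ + Δ₂) := by
    rw [List.forall_mem_map]
    intro s hs
    obtain ⟨C, hC⟩ :=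
      hprem s hs (s.1 + Γ₁) Γ₂ (s.2 + Δ₁) Δ₂ (add_assoc ..).symm (add_assoc ..).symm
    obtain ⟨left, right, ⟨-, rels_left⟩, ter_right, rels_right⟩ := splitInterpolant_iff.1 hC
    refine ⟨C, left, right, ter_right, Finset.subset_inter (rels_left.trans ?_) rels_right⟩
    rw [add_add_add_comm s.1, add_add_add_comm P, relsM_add, relsM_add (P + Q)]
    exact Finset.union_subset_union_left (hrels s hs)
  obtain ⟨D, lefts, right, ter, rels⟩ := exists_common_interpolant premise_interpolant
  rw [List.forall_mem_map] at lefts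
  rw [Finset.subset_inter_iff] at rels
  have left : Derivable Rs (P + Γ₁) (D ::ₘ (Q + Δ₁)) := by
    rw [← Multiset.add_cons]
    refine hrule Γ₁ (D ::ₘ Δ₁) ?_ fun s hs => by simpa using lefts s hs
    simp only [terM_add, terM_cons] at ter ⊢
    grind
  exact (PreInterpolant.mk left right ter rels.1 rels.2).exists_splitInterpolant hRs

theorem add_eq_add_refine {α : Type*} {a b c d : Multiset α} (h : a + b = c + d) :
    ∃ p q r s, a = p + q ∧ b = r + s ∧ c = p + r ∧ d = q + s := by
  classical
  refine ⟨a ∩ c, a - c, c - a, d - (a - c), ?_⟩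
  have counts (x : α) := congrArg (Multiset.count x) h
  simp only [Multiset.count_add] at counts
  refine ⟨?_, ?_, ?_, ?_⟩ <;> ext x <;>
    simp only [Multiset.count_add, Multiset.count_inter, Multiset.count_sub] <;>
    grind

theorem cons_eq_add_cases {α : Type*} {a : α} {s t u : Multiset α} (h : a ::ₘ s = t + u) :
    (∃ t', t = a ::ₘ t' ∧ s = t' + u) ∨ ∃ u', u = a ::ₘ u' ∧ s = t + u' := by
  have ha : a ∈ t + u := h ▸ Multiset.mem_cons_self a s
  rcases Multiset.mem_add.1 ha with ht | hu
  · obtain ⟨t', rfl⟩ := Multiset.exists_cons_of_mem ht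
    exact .inl ⟨t', rfl, by simpa using h⟩
  · obtain ⟨u', rfl⟩ := Multiset.exists_cons_of_mem hu
    exact .inr ⟨u', rfl, by simpa using h⟩

theorem union_subset_left_or_right_of_card_le_one {α : Type*} [DecidableEq α] {s t : Finset α}
    (h : (s ∪ t).card ≤ 1) : s ∪ t ⊆ s ∨ s ∪ t ⊆ t := by
  rcases s.eq_empty_or_nonempty with rfl | hs
  · simp
  · exact .inl (Finset.eq_of_subset_of_card_le Finset.subset_union_left
      (h.trans hs.card_pos)).symm.subset

theorem GeomRule.Singular.consts_eq_empty {R : GeomRule} (hR : R.Singular) : R.consts = ∅ := by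
  refine Set.eq_empty_iff_forall_notMem.2 fun c => ?_
  rintro (⟨P, hP, hc⟩ | ⟨q, hq, hc⟩)
  · simp [hR.1 P hP] at hc
  · simp [hR.2.1 q hq] at hc

theorem GeomRule.Singular.rels_premise_subset {R : GeomRule} (hR : R.Singular) {σ : ℕ → Tm}
    {q : Fm × ℕ} (hq : q ∈ R.QYs) : (q.1.applyσ σ).rels ⊆ relsM (R.inst σ) := by
  rw [Fm.rels_applyσ, R.relsM_inst]
  exact (rels_subset_relsL (List.mem_map_of_mem hq)).trans hR.2.2.2

theorem GeomRule.Singular.relsM_inst_subset {R : GeomRule} (hR : R.Singular) {σ : ℕ → Tm}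
    (hPQ : R.inst σ = P + Q) : relsM (R.inst σ) ⊆ relsM P ∨ relsM (R.inst σ) ⊆ relsM Q := by
  rw [hPQ, relsM_add]
  apply union_subset_left_or_right_of_card_le_one
  rw [← relsM_add, ← hPQ, R.relsM_inst]
  exact (Finset.card_le_card Finset.subset_union_left).trans hR.2.2.1

theorem exists_splitInterpolant_of_geom {R : GeomRule} {σ : ℕ → Tm}
    (hRs : ∀ R ∈ Rs, R.consts = ∅) (hR : R ∈ Rs) (hsing : R.Singular)
    (hfresh : ∀ q ∈ R.QYs, ∃ z, σ q.2 = .var z ∧ .var z ∉ terM (R.inst σ + Γ) ∪ terM Δ)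
    (ih : ∀ q ∈ R.QYs, Interpolable Rs (q.1.applyσ σ ::ₘ (R.inst σ + Γ)) Δ)
    (hΓ : Γ = Γ₁ + Γ₂) (hΔ : Δ = Δ₁ + Δ₂) :
    ∃ C, SplitInterpolant Rs (R.inst σ + Γ₁) Γ₂ Δ₁ Δ₂ C := by
  have hrule := exists_splitInterpolant_of_rule (P := R.inst σ) (Q := 0)
    (L := R.QYs.map fun q => (q.1.applyσ σ ::ₘ R.inst σ, 0)) hRs hΓ hΔ
  simp only [List.forall_mem_map, Multiset.cons_add, zero_add, add_zero] at hrule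
  refine hrule ih (fun q hq => ?_) fun Γ' Δ' hter prem => .geom hR (fun q hq => ?_) prem
  · rw [relsM_cons]
    exact Finset.union_subset (hsing.rels_premise_subset hq) subset_rfl
  · obtain ⟨z, hz, hz'⟩ := hfresh q hq
    refine ⟨z, hz, fun hmem => hz' ?_⟩
    simp only [terM_add, Finset.union_assoc] at hter hmem ⊢
    exact Finset.union_subset_union_right hter hmem

namespace Interpolable

theorem of_ruleL {L : List (Multiset Fm × Multiset Fm)} (hRs : ∀ R ∈ Rs, R.consts = ∅)
    (hprem : ∀ s ∈ L, Interpolable Rs (s.1 + Γ) (s.2 + Δ))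
    (hrels : ∀ s ∈ L, relsM (s.1 + s.2) ⊆ A.rels)
    (hrule : ∀ Γ' Δ', terM (Γ' + Δ') ⊆ terM (Γ + Δ) →
      (∀ s ∈ L, Derivable Rs (s.1 + Γ') (s.2 + Δ')) → Derivable Rs (A ::ₘ Γ') Δ') :
    Interpolable Rs (A ::ₘ Γ) Δ := by
  intro Γ₁ Γ₂ Δ₁ Δ₂ hΓ hΔ
  have principal_left {Γ₁ Γ₂ Δ₁ Δ₂} (hΓ : Γ = Γ₁ + Γ₂) (hΔ : Δ = Δ₁ + Δ₂) :
      ∃ C, SplitInterpolant Rs (A ::ₘ Γ₁) Γ₂ Δ₁ Δ₂ C := by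
    simpa using exists_splitInterpolant_of_rule (P := {A}) (Q := 0) hRs hΓ hΔ hprem
      (by simpa [relsM] using hrels) (by simpa using hrule)
  rcases cons_eq_add_cases hΓ with ⟨Γ₁, rfl, hΓ'⟩ | ⟨Γ₂, rfl, hΓ'⟩
  · exact principal_left hΓ' hΔ
  · exact exists_splitInterpolant_symm
      (principal_left (hΓ'.trans (add_comm ..)) (hΔ.trans (add_comm ..)))

theorem of_ruleR {L : List (Multiset Fm × Multiset Fm)} (hRs : ∀ R ∈ Rs, R.consts = ∅)
    (hprem : ∀ s ∈ L, Interpolable Rs (s.1 + Γ) (s.2 + Δ))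
    (hrels : ∀ s ∈ L, relsM (s.1 + s.2) ⊆ A.rels)
    (hrule : ∀ Γ' Δ', terM (Γ' + Δ') ⊆ terM (Γ + Δ) →
      (∀ s ∈ L, Derivable Rs (s.1 + Γ') (s.2 + Δ')) → Derivable Rs Γ' (A ::ₘ Δ')) :
    Interpolable Rs Γ (A ::ₘ Δ) := by
  intro Γ₁ Γ₂ Δ₁ Δ₂ hΓ hΔ
  have principal_left {Γ₁ Γ₂ Δ₁ Δ₂} (hΓ : Γ = Γ₁ + Γ₂) (hΔ : Δ = Δ₁ + Δ₂) :
      ∃ C, SplitInterpolant Rs Γ₁ Γ₂ (A ::ₘ Δ₁) Δ₂ C := by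
    simpa using exists_splitInterpolant_of_rule (P := 0) (Q := {A}) hRs hΓ hΔ hprem
      (by simpa [relsM] using hrels) (by simpa using hrule)
  rcases cons_eq_add_cases hΔ with ⟨Δ₁, rfl, hΔ'⟩ | ⟨Δ₂, rfl, hΔ'⟩
  · exact principal_left hΓ hΔ'
  · exact exists_splitInterpolant_symm
      (principal_left (hΓ.trans (add_comm ..)) (hΔ'.trans (add_comm ..)))

theorem ax (hA : A.isAtom) : Interpolable Rs (A ::ₘ Γ) (A ::ₘ Δ) := by
  intro Γ₁ Γ₂ Δ₁ Δ₂ hΓ hΔ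
  have same_part (Γ₁ Γ₂ Δ₁ Δ₂ : Multiset Fm) :
      ∃ C, SplitInterpolant Rs (A ::ₘ Γ₁) Γ₂ (A ::ₘ Δ₁) Δ₂ C :=
    ⟨.bot, (Derivable.ax hA).mono le_rfl (Multiset.le_cons_self ..), .botL,
      by simp [Fm.lang, Fm.ter, Fm.rels]⟩
  have opposite_parts (Γ₁ Γ₂ Δ₁ Δ₂ : Multiset Fm) :
      ∃ C, SplitInterpolant Rs (A ::ₘ Γ₁) Γ₂ Δ₁ (A ::ₘ Δ₂) C :=
    ⟨A, .ax hA, .ax hA, Finset.subset_inter (by simp [langM]) (by simp [langM])⟩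
  rcases cons_eq_add_cases hΓ with ⟨Γ₁, rfl, -⟩ | ⟨Γ₂, rfl, -⟩ <;>
    rcases cons_eq_add_cases hΔ with ⟨Δ₁, rfl, -⟩ | ⟨Δ₂, rfl, -⟩
  · exact same_part ..
  · exact opposite_parts ..
  · exact exists_splitInterpolant_symm (opposite_parts ..)
  · exact exists_splitInterpolant_symm (same_part ..)

theorem botL (hRs : ∀ R ∈ Rs, R.consts = ∅) : Interpolable Rs (.bot ::ₘ Γ) Δ :=
  of_ruleL hRs (L := []) (by simp) (by simp) fun _ _ _ _ => .botL

theorem topR (hRs : ∀ R ∈ Rs, R.consts = ∅) : Interpolable Rs Γ (.top ::ₘ Δ) :=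
  of_ruleR hRs (L := []) (by simp) (by simp) fun _ _ _ _ => .topR

theorem andL (hRs : ∀ R ∈ Rs, R.consts = ∅) (ih : Interpolable Rs (A ::ₘ B ::ₘ Γ) Δ) :
    Interpolable Rs (.and A B ::ₘ Γ) Δ :=
  of_ruleL hRs (L := [({A, B}, 0)]) (by simpa using ih) (by simp [relsM, Fm.rels])
    fun _ _ _ prem => .andL (by simpa using prem)

theorem andR (hRs : ∀ R ∈ Rs, R.consts = ∅) (ihA : Interpolable Rs Γ (A ::ₘ Δ))
    (ihB : Interpolable Rs Γ (B ::ₘ Δ)) : Interpolable Rs Γ (.and A B ::ₘ Δ) :=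
  of_ruleR hRs (L := [(0, {A}), (0, {B})]) (by simpa using ⟨ihA, ihB⟩)
    (by simp [relsM, Fm.rels])
    fun _ _ _ prem => .andR (by simpa using prem (0, {A})) (by simpa using prem (0, {B}))

theorem orL (hRs : ∀ R ∈ Rs, R.consts = ∅) (ihA : Interpolable Rs (A ::ₘ Γ) Δ)
    (ihB : Interpolable Rs (B ::ₘ Γ) Δ) : Interpolable Rs (.or A B ::ₘ Γ) Δ :=
  of_ruleL hRs (L := [({A}, 0), ({B}, 0)]) (by simpa using ⟨ihA, ihB⟩)
    (by simp [relsM, Fm.rels])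
    fun _ _ _ prem => .orL (by simpa using prem ({A}, 0)) (by simpa using prem ({B}, 0))

theorem orR (hRs : ∀ R ∈ Rs, R.consts = ∅) (ih : Interpolable Rs Γ (A ::ₘ B ::ₘ Δ)) :
    Interpolable Rs Γ (.or A B ::ₘ Δ) :=
  of_ruleR hRs (L := [(0, {A, B})]) (by simpa using ih) (by simp [relsM, Fm.rels])
    fun _ _ _ prem => .orR (by simpa using prem)

theorem impL (hRs : ∀ R ∈ Rs, R.consts = ∅) (ihA : Interpolable Rs Γ (A ::ₘ Δ))
    (ihB : Interpolable Rs (B ::ₘ Γ) Δ) : Interpolable Rs (.imp A B ::ₘ Γ) Δ :=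
  of_ruleL hRs (L := [(0, {A}), ({B}, 0)]) (by simpa using ⟨ihA, ihB⟩)
    (by simp [relsM, Fm.rels])
    fun _ _ _ prem => .impL (by simpa using prem (0, {A})) (by simpa using prem ({B}, 0))

theorem impR (hRs : ∀ R ∈ Rs, R.consts = ∅) (ih : Interpolable Rs (A ::ₘ Γ) (B ::ₘ Δ)) :
    Interpolable Rs Γ (.imp A B ::ₘ Δ) :=
  of_ruleR hRs (L := [({A}, {B})]) (by simpa using ih) (by simp [relsM, Fm.rels])
    fun _ _ _ prem => .impR (by simpa using prem)

theorem allL (hRs : ∀ R ∈ Rs, R.consts = ∅) (hfree : A.freeFor t (.var x))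
    (ih : Interpolable Rs (A.subst (.var x) t ::ₘ .all x A ::ₘ Γ) Δ) :
    Interpolable Rs (.all x A ::ₘ Γ) Δ :=
  of_ruleL hRs (L := [({A.subst (.var x) t, .all x A}, 0)]) (by simpa using ih)
    (by simp [relsM, Fm.rels, Fm.rels_subst])
    fun _ _ _ prem => .allL hfree (by simpa using prem)

theorem exR (hRs : ∀ R ∈ Rs, R.consts = ∅) (hfree : A.freeFor t (.var x))
    (ih : Interpolable Rs Γ (.ex x A ::ₘ A.subst (.var x) t ::ₘ Δ)) :
    Interpolable Rs Γ (.ex x A ::ₘ Δ) :=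
  of_ruleR hRs (L := [(0, {.ex x A, A.subst (.var x) t})]) (by simpa using ih)
    (by simp [relsM, Fm.rels, Fm.rels_subst])
    fun _ _ _ prem => .exR hfree (by simpa using prem)

theorem allR (hRs : ∀ R ∈ Rs, R.consts = ∅) (hfree : A.freeFor (.var y) (.var x))
    (hy : .var y ∉ terM Γ ∪ terM Δ ∪ (Fm.all x A).ter)
    (ih : Interpolable Rs Γ (A.subst (.var x) (.var y) ::ₘ Δ)) :
    Interpolable Rs Γ (.all x A ::ₘ Δ) :=
  of_ruleR hRs (L := [(0, {A.subst (.var x) (.var y)})]) (by simpa using ih)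
    (by simp [relsM, Fm.rels, Fm.rels_subst])
    fun _ _ hter prem => .allR hfree (by simp only [terM_add] at hter; grind)
      (by simpa using prem)

theorem exL (hRs : ∀ R ∈ Rs, R.consts = ∅) (hfree : A.freeFor (.var y) (.var x))
    (hy : .var y ∉ terM Γ ∪ terM Δ ∪ (Fm.ex x A).ter)
    (ih : Interpolable Rs (A.subst (.var x) (.var y) ::ₘ Γ) Δ) :
    Interpolable Rs (.ex x A ::ₘ Γ) Δ :=
  of_ruleL hRs (L := [({A.subst (.var x) (.var y)}, 0)]) (by simpa using ih)
    (by simp [relsM, Fm.rels, Fm.rels_subst])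
    fun _ _ hter prem => .exL hfree (by simp only [terM_add] at hter; grind)
      (by simpa using prem)

theorem geom {R : GeomRule} {σ : ℕ → Tm} (hRs : ∀ R ∈ Rs, R.consts = ∅) (hR : R ∈ Rs)
    (hsing : R.Singular)
    (hfresh : ∀ q ∈ R.QYs, ∃ z, σ q.2 = .var z ∧ .var z ∉ terM (R.inst σ + Γ) ∪ terM Δ)
    (ih : ∀ q ∈ R.QYs, Interpolable Rs (q.1.applyσ σ ::ₘ (R.inst σ + Γ)) Δ) :
    Interpolable Rs (R.inst σ + Γ) Δ := by
  intro Θ₁ Θ₂ Δ₁ Δ₂ hΘ hΔ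
  have relations_left {P₁ P₂ Γ₁ Γ₂ Δ₁ Δ₂} (hP : R.inst σ = P₁ + P₂) (hΓ : Γ = Γ₁ + Γ₂)
      (hΔ : Δ = Δ₁ + Δ₂) (hrels : relsM (R.inst σ) ⊆ relsM P₁) :
      ∃ C, SplitInterpolant Rs (P₁ + Γ₁) (P₂ + Γ₂) Δ₁ Δ₂ C := by
    refine exists_splitInterpolant_move_atoms hRs (fun A hA => ?_) ?_ ?_
    · exact R.isAtom_of_mem_inst (hP ▸ Multiset.mem_add.2 (.inr hA))
    · rw [hP] at hrels
      simp only [relsM_add] at hrels ⊢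
      grind
    · rw [← add_assoc, add_comm P₂, ← hP]
      exact exists_splitInterpolant_of_geom hRs hR hsing hfresh ih hΓ hΔ
  obtain ⟨P₁, P₂, Γ₁, Γ₂, hP, hΓ, rfl, rfl⟩ := add_eq_add_refine hΘ
  rcases hsing.relsM_inst_subset hP with hrels | hrels
  · exact relations_left hP hΓ hΔ hrels
  · exact exists_splitInterpolant_symm (relations_left (hP.trans (add_comm ..))
      (hΓ.trans (add_comm ..)) (hΔ.trans (add_comm ..)) hrels)

end Interpolable

theorem DerG.interpolable (hsing : ∀ R ∈ Rs, R.Singular) (h : DerG Rs n Γ Δ) :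
    Interpolable Rs Γ Δ := by
  have hRs (R) (hR : R ∈ Rs) : R.consts = ∅ := (hsing R hR).consts_eq_empty
  induction h with
  | ax hA => exact .ax hA
  | botL => exact .botL hRs
  | topR => exact .topR hRs
  | andL _ ih => exact .andL hRs ih
  | andR _ _ ihA ihB => exact .andR hRs ihA ihB
  | orL _ _ ihA ihB => exact .orL hRs ihA ihB
  | orR _ ih => exact .orR hRs ih
  | impL _ _ ihA ihB => exact .impL hRs ihA ihB
  | impR _ ih => exact .impR hRs ih
  | allL hfree _ ih => exact .allL hRs hfree ih
  | allR hfree hy _ ih => exact .allR hRs hfree hy ih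
  | exL hfree hy _ ih => exact .exL hRs hfree hy ih
  | exR hfree _ ih => exact .exR hRs hfree ih
  | geom hR hfresh _ ih => exact .geom hRs hR (hsing _ hR) hfresh ih

end

theorem maehara_singular_general (Rs : Set GeomRule) (hsing : ∀ R ∈ Rs, R.Singular)
    (Γ₁ Γ₂ Δ₁ Δ₂ : Multiset Fm) (hder : Derivable Rs (Γ₁ + Γ₂) (Δ₁ + Δ₂)) :
    ∃ C : Fm, SplitInterpolant Rs Γ₁ Γ₂ Δ₁ Δ₂ C :=
  hder.elim fun _ h => h.interpolable hsing _ _ _ _ rfl rfl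

/-- Maehara's lemma for singular geometric extensions: for a
finite set R^s of singular geometric rules, every partition Γ₁;Γ₂⇒Δ₁;Δ₂ of a
sequent derivable in G+R^s has a split-interpolant. -/
theorem maehara_singular (Rs : Set GeomRule) (hfin : Rs.Finite)
    (hsing : ∀ R ∈ Rs, R.Singular)
    (Γ₁ Γ₂ Δ₁ Δ₂ : Multiset Fm)
    (hder : Derivable Rs (Γ₁ + Γ₂) (Δ₁ + Δ₂)) :
    ∃ C : Fm, SplitInterpolant Rs Γ₁ Γ₂ Δ₁ Δ₂ C := by
  exact maehara_singular_general Rs hsing Γ₁ Γ₂ Δ₁ Δ₂ hder
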